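/- Let W be a nonempty string, a a symbol, and W' = W ++ [a]. Let k = k(W) be the active position of W, i.e., the least index k such that the suffix W[k:] occurs at least twice in W. Then for every j with 1 ≤ j < k − 1, the string W[j:] ++ [a] is a +-leaf of preLST(W'): it is a nonempty suffix of W' that occurs exactly once in W' (hence a leaf, a type-1 node, of preLST(W')), and the string W[j:] obtained from it by removing its last symbol is not a node of preLST(W'). -/

import Mathlib

/-- `U` is right-branching in `T`: there are distinct symbols `a ≠ b` with both
`U ++ [a]` and `U ++ [b]` infixes of `T`. -/
def RightBranching {σ : Type*} (T U : List σ) : Prop :=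
  ∃ a b : σ, a ≠ b ∧ (U ++ [a]) <:+: T ∧ (U ++ [b]) <:+: T

/-- `U` is a type-1 node of `LST(T)`. -/
def LType1 {σ : Type*} (T U : List σ) : Prop :=
  U <:+: T ∧ (U = [] ∨ U <:+ T ∨ RightBranching T U)

/-- `U` is a type-2 node of `LST(T)`. -/
def LType2 {σ : Type*} (T U : List σ) : Prop :=
  U <:+: T ∧ ¬ LType1 T U ∧ LType1 T U.tail

/-- `U` is a node of `LST(T)`: type-1 or type-2. -/
def LNode {σ : Type*} (T U : List σ) : Prop :=
  LType1 T U ∨ LType2 T U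

/-- `U` occurs in `T` at (0-based) position `p`. -/
def OccursAt {σ : Type*} (T U : List σ) (p : ℕ) : Prop :=
  U <+: T.drop p ∧ p + U.length ≤ T.length

/-- `U` occurs exactly once in `T`. -/
def OccursOnce {σ : Type*} (T U : List σ) : Prop :=
  ∃! p : ℕ, OccursAt T U p

/-- `U` occurs at least twice in `T`. -/
def OccursTwice {σ : Type*} (T U : List σ) : Prop :=
  ∃ p q : ℕ, p ≠ q ∧ OccursAt T U p ∧ OccursAt T U q

/-- `U` is a type-1 node of `preLST(T)`. -/
def PType1 {σ : Type*} (T U : List σ) : Prop :=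
  U <:+: T ∧ (U = [] ∨ RightBranching T U ∨ (U ≠ [] ∧ U <:+ T ∧ OccursOnce T U))

/-- `U` is a type-2 node of `preLST(T)`. -/
def PType2 {σ : Type*} (T U : List σ) : Prop :=
  U <:+: T ∧ ¬ PType1 T U ∧ PType1 T U.tail

/-- `U` is a node of `preLST(T)`: type-1 or type-2. -/
def PNode {σ : Type*} (T U : List σ) : Prop :=
  PType1 T U ∨ PType2 T U

/-!
Let `U` be a suffix of `W` that occurs only once in `W`. Deleting the last symbol turns an
occurrence of `U ++ [c]` in `W ++ [a]` into an occurrence of `U` in `W` at the same position, which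
is therefore the final one, so that `c = a`. Hence `U ++ [a]` occurs once in `W ++ [a]`, and `U` is
not right-branching there. If moreover `U` is a suffix of `W ++ [a]` then it occurs twice, so a
nonempty such `U` is never a type-1 node of `preLST(W ++ [a])`. When `j < k - 1`, both `W[j:]` and
its tail `W[j + 1:]` are nonempty suffixes occurring once, so `W[j:]` is of neither type.
-/

section Occurrences

variable {σ : Type*} {S T U V W : List σ} {p : ℕ}

theorem occursAt_iff_exists_append :
    OccursAt T U p ↔ ∃ X Y : List σ, X ++ U ++ Y = T ∧ X.length = p := by
  constructor
  · rintro ⟨⟨Y, hY⟩, hp⟩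
    refine ⟨T.take p, Y, ?_, List.length_take_of_le (by omega)⟩
    rw [List.append_assoc, hY, List.take_append_drop]
  · rintro ⟨X, Y, rfl, rfl⟩
    exact ⟨⟨Y, by simp⟩, by simp⟩

theorem occursAt_of_isSuffix (h : U <:+ T) : OccursAt T U (T.length - U.length) := by
  obtain ⟨X, rfl⟩ := h
  exact occursAt_iff_exists_append.2 ⟨X, [], by simp⟩

theorem OccursAt.append_right (h : OccursAt T U p) (S : List σ) : OccursAt (T ++ S) U p := by
  obtain ⟨X, Y, rfl, rfl⟩ := occursAt_iff_exists_append.1 h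
  exact occursAt_iff_exists_append.2 ⟨X, Y ++ S, by simp⟩

theorem OccursAt.of_append_append (h : OccursAt (W ++ S) (U ++ V) p)
    (hSV : S.length ≤ V.length) : OccursAt W U p := by
  obtain ⟨X, Y, hXY, rfl⟩ := occursAt_iff_exists_append.1 h
  have hlen : (X ++ U).length ≤ W.length := by
    have := congrArg List.length hXY
    simp only [List.length_append] at this ⊢
    omega
  obtain ⟨Z, hZ⟩ : X ++ U <+: W :=
    List.prefix_of_prefix_length_le ⟨V ++ Y, by simpa using hXY⟩ (List.prefix_append W S) hlen
  exact occursAt_iff_exists_append.2 ⟨X, Z, hZ, rfl⟩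

theorem OccursAt.of_append_left (h : OccursAt T (U ++ V) p) :
    OccursAt T V (p + U.length) := by
  obtain ⟨X, Y, rfl, rfl⟩ := occursAt_iff_exists_append.1 h
  exact occursAt_iff_exists_append.2 ⟨X ++ U, Y, by simp⟩

theorem OccursAt.occursOnce (h : OccursAt T U p) (hU : ¬ OccursTwice T U) : OccursOnce T U :=
  ⟨p, h, fun q hq => by_contra fun hqp => hU ⟨q, p, hqp, hq, h⟩⟩

theorem OccursOnce.of_isSuffix (hV : OccursOnce T V) (hVU : V <:+ U) (hU : OccursAt T U p) :
    OccursOnce T U := by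
  obtain ⟨X, rfl⟩ := hVU
  exact ⟨p, hU, fun q hq =>
    Nat.add_right_cancel (hV.unique hq.of_append_left hU.of_append_left)⟩

theorem OccursOnce.append_append (hU : OccursOnce W U) (hUW : U <:+ W) (S : List σ) :
    OccursOnce (W ++ S) (U ++ S) :=
  ⟨_, occursAt_of_isSuffix (List.suffix_append_self_iff.2 hUW), fun _ hq =>
    hU.unique (hq.of_append_append le_rfl)
      ((occursAt_of_isSuffix (List.suffix_append_self_iff.2 hUW)).of_append_append le_rfl)⟩

theorem OccursOnce.eq_of_append_isInfix_append (hU : OccursOnce W U) (hUW : U <:+ W)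
    (h : U ++ V <:+: W ++ S) (hSV : S.length ≤ V.length) : V = S := by
  obtain ⟨X, Y, hXY⟩ := h
  have hX : OccursAt W U X.length :=
    (occursAt_iff_exists_append.2 ⟨X, Y, hXY, rfl⟩).of_append_append hSV
  have hXW : (X ++ U).length = W.length := by
    have := hU.unique hX (occursAt_of_isSuffix hUW)
    have := hUW.length_le
    simp only [List.length_append]
    omega
  have hVY : V ++ Y = S :=
    List.append_inj_right (by simpa only [List.append_assoc] using hXY) hXW
  exact List.IsPrefix.eq_of_length_le ⟨Y, hVY⟩ hSV

theorem not_occursOnce_append_of_isSuffix (hUW : U <:+ W) (hUWS : U <:+ W ++ S) (hS : S ≠ []) :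
    ¬ OccursOnce (W ++ S) U := by
  intro hU
  have hpos := hU.unique ((occursAt_of_isSuffix hUW).append_right S) (occursAt_of_isSuffix hUWS)
  have hS_pos := List.length_pos_iff.2 hS
  have hUW_len := hUW.length_le
  rw [List.length_append] at hpos
  omega

end Occurrences

section Nodes

variable {σ : Type*} {U W : List σ}

theorem OccursOnce.not_rightBranching_append_singleton (hU : OccursOnce W U) (hUW : U <:+ W)
    (a : σ) : ¬ RightBranching (W ++ [a]) U := by
  rintro ⟨b, c, hbc, hb, hc⟩
  have hba : [b] = [a] := hU.eq_of_append_isInfix_append hUW hb le_rfl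
  have hca : [c] = [a] := hU.eq_of_append_isInfix_append hUW hc le_rfl
  exact hbc (List.singleton_injective (hba.trans hca.symm))

theorem OccursOnce.not_pType1_append_singleton (hU : OccursOnce W U) (hUW : U <:+ W)
    (hne : U ≠ []) (a : σ) : ¬ PType1 (W ++ [a]) U := by
  rintro ⟨-, hnil | hbranch | ⟨-, hsuffix, honce⟩⟩
  · exact hne hnil
  · exact hU.not_rightBranching_append_singleton hUW a hbranch
  · exact not_occursOnce_append_of_isSuffix hUW hsuffix (List.cons_ne_nil a []) honce

theorem OccursOnce.not_pNode_append_singleton (hU : OccursOnce W U.tail) (hUW : U <:+ W)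
    (hne : U.tail ≠ []) (a : σ) : ¬ PNode (W ++ [a]) U := by
  have htail : U.tail <:+ U := U.tail_suffix
  rintro (htype1 | ⟨-, -, htype1⟩)
  · have hU_ne : U ≠ [] := fun h => hne (by rw [h, List.tail_nil])
    exact (hU.of_isSuffix htail (occursAt_of_isSuffix hUW)).not_pType1_append_singleton
      hUW hU_ne a htype1
  · exact hU.not_pType1_append_singleton (htail.trans hUW) hne a htype1

end Nodes

/-- Let `k` be the active position of a nonempty string `W` and
`W' = W ++ [a]`.  For every `1 ≤ j < k - 1`, the string `W[j:] ++ [a]` is a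
`+`-leaf of `preLST(W')`: it is a nonempty suffix of `W'` that occurs exactly once
in `W'`, and `W[j:]` (obtained by removing its last symbol) is not a node of
`preLST(W')`. -/
theorem stmt_9 {σ : Type*} [DecidableEq σ] (W : List σ) (hne : W ≠ []) (a : σ)
    (k : ℕ) (hk1 : 1 ≤ k) (hk2 : k ≤ W.length + 1)
    (hkocc : OccursTwice W (W.drop (k - 1)))
    (hkmin : ∀ j : ℕ, 1 ≤ j → j < k → ¬ OccursTwice W (W.drop (j - 1))) :
    ∀ j : ℕ, 1 ≤ j → j + 1 < k →
      (W.drop (j - 1) ++ [a]) ≠ [] ∧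
      (W.drop (j - 1) ++ [a]) <:+ (W ++ [a]) ∧
      OccursOnce (W ++ [a]) (W.drop (j - 1) ++ [a]) ∧
      ¬ PNode (W ++ [a]) (W.drop (j - 1)) := by
  intro j hj hjk
  have hsuffix : W.drop (j - 1) <:+ W := W.drop_suffix _
  have honce : OccursOnce W (W.drop (j - 1)) :=
    (occursAt_of_isSuffix hsuffix).occursOnce (hkmin j hj (by omega))
  have htail : (W.drop (j - 1)).tail = W.drop j := by
    rw [List.tail_drop, Nat.sub_add_cancel hj]
  have honce_tail : OccursOnce W (W.drop j) :=
    (occursAt_of_isSuffix (W.drop_suffix j)).occursOnce (hkmin (j + 1) (by omega) hjk)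
  have hne_tail : W.drop j ≠ [] := by
    rw [Ne, List.drop_eq_nil_iff]
    omega
  rw [← htail] at honce_tail hne_tail
  exact ⟨List.concat_ne_nil a _, List.suffix_append_self_iff.2 hsuffix,
    honce.append_append hsuffix [a], honce_tail.not_pNode_append_singleton hsuffix hne_tail a⟩
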